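/- Let D be a natural number, n : Fin D → ℕ, and for each d let L⁽ᵈ⁾ and U⁽ᵈ⁾ be invertible (n d)-by-(n d) real matrices with L⁽ᵈ⁾ lower triangular and U⁽ᵈ⁾ upper triangular with respect to the natural order on Fin (n d). Let S be a nonempty set of multi-indices (functions i with i d ∈ Fin (n d)) that is downward closed with respect to the coordinatewise order, and let 𝐊 i j = Π_{d} (L⁽ᵈ⁾·U⁽ᵈ⁾) (i d) (j d). Then the chop K̂ of 𝐊 to S is invertible, and K̂⁻¹ equals the ordered product over d = 0, …, D−1 of the chops to S of the one-mode bracket matrices built from (U⁽ᵈ⁾)⁻¹, followed by the ordered product over d = 0, …, D−1 of the chops to S of the one-mode bracket matrices built from (L⁽ᵈ⁾)⁻¹. -/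

import Mathlib

/-!
Put the product order on multi-indices. A Kronecker product of upper triangular factors has a
nonzero `(k, j)` entry only when `k ≤ j`. So for `j` in the downward closed set `S` the index `k`
is already in `S`, and chopping loses no term of `(M * U) i j = ∑ k, M i k * U k j`: the chop of
`M * U` is the product of the chops, whatever `M` is.

Hence the chop of `𝐊 = (⨂ L) * (⨂ U)` is the product of the chops of `⨂ L` and `⨂ U`. Now `⨂ U` is
the product, in any order, of the one-mode brackets of the `U d`, and each of these is upper
triangular, so chopping commutes with this product and with the inversion of its factors. Listing
the modes backwards compensates for the reversal of a product under inversion. The lower triangular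
case follows by transposition.
-/

namespace ChoppedKernel

open Matrix

section Chop

variable {α R : Type*}

/-- The chop of a matrix to a finite set `S` of indices: the rows and columns in `S`. -/
def chop (S : Finset α) (M : Matrix α α R) : Matrix S S R :=
  M.submatrix (fun i : S => (i : α)) (fun j : S => (j : α))

/-- Upper triangularity relative to an order relation that need not be total. For a partial order
it is stronger than `Matrix.IsUpperTriangular`, which allows nonzero entries at incomparable
indices. Lower triangularity of `M` is expressed as `SupportedOnLE Mᵀ`. -/
def SupportedOnLE [Zero R] [LE α] (M : Matrix α α R) : Prop :=
  ∀ ⦃i j⦄, M i j ≠ 0 → i ≤ j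

theorem transpose_chop (S : Finset α) (M : Matrix α α R) : (chop S M)ᵀ = chop S Mᵀ :=
  rfl

theorem chop_one [DecidableEq α] [Zero R] [One R] (S : Finset α) :
    chop S (1 : Matrix α α R) = 1 :=
  submatrix_one _ Subtype.val_injective

theorem supportedOnLE_one [DecidableEq α] [Preorder α] [Zero R] [One R] :
    SupportedOnLE (1 : Matrix α α R) := fun _ _ h =>
  le_of_eq (not_imp_comm.1 one_apply_ne h)

variable [Fintype α] [LE α] {S : Finset α}

theorem chop_mul_of_supportedOnLE [NonUnitalNonAssocSemiring R] (hS : IsLowerSet (S : Set α))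
    (M : Matrix α α R) {N : Matrix α α R} (hN : SupportedOnLE N) :
    chop S (M * N) = chop S M * chop S N := by
  ext i j
  have vanish_outside : ∀ k ∉ S, M i k * N k j = 0 := fun k hk => by
    by_contra h
    exact hk (hS (hN (right_ne_zero_of_mul h)) j.2)
  calc ∑ k, M i k * N k j
    _ = ∑ k ∈ S, M i k * N k j :=
      (Finset.sum_subset S.subset_univ fun k _ => vanish_outside k).symm
    _ = ∑ k : S, M i k * N k j := (Finset.sum_coe_sort S fun k => M i k * N k j).symm

variable [DecidableEq α]

theorem chop_list_prod_of_supportedOnLE [Semiring R] (hS : IsLowerSet (S : Set α))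
    {l : List (Matrix α α R)} (hl : ∀ M ∈ l, SupportedOnLE M) :
    chop S l.prod = (l.map (chop S)).prod := by
  induction l using List.reverseRecOn with
  | nil => exact chop_one S
  | append_singleton l M ih =>
    simp only [List.forall_mem_append, List.forall_mem_singleton] at hl
    simp only [List.prod_append, List.prod_singleton, List.map_append, List.map_singleton]
    rw [chop_mul_of_supportedOnLE hS _ hl.2, ih hl.1]

variable [CommRing R] {M : Matrix α α R}

theorem chop_inv_mul_chop (hS : IsLowerSet (S : Set α)) (hM : SupportedOnLE M) (hu : IsUnit M) :
    chop S M⁻¹ * chop S M = 1 := by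
  rw [← chop_mul_of_supportedOnLE hS _ hM, nonsing_inv_mul _ ((isUnit_iff_isUnit_det M).1 hu),
    chop_one]

theorem isUnit_chop (hS : IsLowerSet (S : Set α)) (hM : SupportedOnLE M) (hu : IsUnit M) :
    IsUnit (chop S M) :=
  .of_mul_eq_one_right _ (chop_inv_mul_chop hS hM hu)

theorem inv_chop (hS : IsLowerSet (S : Set α)) (hM : SupportedOnLE M) (hu : IsUnit M) :
    (chop S M)⁻¹ = chop S M⁻¹ :=
  inv_eq_left_inv (chop_inv_mul_chop hS hM hu)

end Chop

theorem list_prod_map_mulSingle {ι : Type*} [DecidableEq ι] {M : ι → Type*} [∀ d, Monoid (M d)]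
    {l : List ι} (hl : l.Nodup) (hmem : ∀ d, d ∈ l) (a : ∀ d, M d) :
    (l.map fun d => Pi.mulSingle d (a d)).prod = a := by
  ext d
  rw [Pi.list_prod_apply, List.map_map, List.prod_map_eq_pow_single d,
    List.count_eq_one_of_mem hl (hmem d), pow_one, Function.comp_apply, Pi.mulSingle_eq_same]
  exact fun d' hd' _ => Pi.mulSingle_eq_of_ne' hd' _

section Kronecker

variable {ι R : Type*} [Fintype ι] [DecidableEq ι] {κ : ι → Type*} [∀ d, Fintype (κ d)]
  [∀ d, DecidableEq (κ d)]

section CommSemiring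

variable [CommSemiring R]

/-- The Kronecker product of a family of square matrices, bundled as a monoid homomorphism on
families: this is the mixed-product property. -/
def piKronecker : (∀ d, Matrix (κ d) (κ d) R) →* Matrix (∀ d, κ d) (∀ d, κ d) R where
  toFun A := of fun i j => ∏ d, A d (i d) (j d)
  map_one' := by
    ext i j
    simp only [of_apply, Pi.one_apply, one_apply, Fintype.prod_ite_zero, funext_iff,
      Finset.prod_const_one]
  map_mul' A B := by
    ext i j
    simp only [of_apply, Pi.mul_apply, mul_apply, Finset.prod_univ_sum, Fintype.piFinset_univ,
      Finset.prod_mul_distrib]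

/-- The one-mode bracket matrix of `A`: the Kronecker product of `A` in position `d` with
identities in all other positions. -/
def modeBracket (d : ι) : Matrix (κ d) (κ d) R →* Matrix (∀ d, κ d) (∀ d, κ d) R :=
  piKronecker.comp (MonoidHom.mulSingle (fun d => Matrix (κ d) (κ d) R) d)

theorem piKronecker_apply (A : ∀ d, Matrix (κ d) (κ d) R) (i j : ∀ d, κ d) :
    piKronecker A i j = ∏ d, A d (i d) (j d) :=
  rfl

theorem modeBracket_apply (d : ι) (A : Matrix (κ d) (κ d) R) (i j : ∀ d, κ d) :
    modeBracket d A i j =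
      A (i d) (j d) * ∏ d' ∈ Finset.univ.erase d, if i d' = j d' then 1 else 0 := by
  change ∏ d', Pi.mulSingle (M := fun d => Matrix (κ d) (κ d) R) d A d' (i d') (j d') = _
  rw [← Finset.mul_prod_erase _ _ (Finset.mem_univ d), Pi.mulSingle_eq_same]
  congr 1
  refine Finset.prod_congr rfl fun d' hd' => ?_
  rw [Pi.mulSingle_eq_of_ne (Finset.ne_of_mem_erase hd'), one_apply]

theorem transpose_piKronecker (A : ∀ d, Matrix (κ d) (κ d) R) :
    (piKronecker A)ᵀ = piKronecker fun d => (A d)ᵀ :=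
  rfl

theorem transpose_modeBracket (d : ι) (A : Matrix (κ d) (κ d) R) :
    (modeBracket d A)ᵀ = modeBracket d Aᵀ := by
  ext i j
  simp only [transpose_apply, modeBracket_apply, eq_comm]

theorem list_prod_map_modeBracket {l : List ι} (hl : l.Nodup) (hmem : ∀ d, d ∈ l)
    (A : ∀ d, Matrix (κ d) (κ d) R) :
    (l.map fun d => modeBracket d (A d)).prod = piKronecker A := by
  conv_rhs => rw [← list_prod_map_mulSingle hl hmem A, map_list_prod, List.map_map]
  rfl

theorem supportedOnLE_piKronecker [∀ d, LE (κ d)] {A : ∀ d, Matrix (κ d) (κ d) R}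
    (hA : ∀ d, SupportedOnLE (A d)) : SupportedOnLE (piKronecker A) := fun i j h d => by
  by_contra hd
  exact h (Finset.prod_eq_zero (Finset.mem_univ d) (not_imp_comm.1 (@hA d _ _) hd))

theorem supportedOnLE_modeBracket [∀ d, Preorder (κ d)] {d : ι} {A : Matrix (κ d) (κ d) R}
    (hA : SupportedOnLE A) : SupportedOnLE (modeBracket d A) := by
  refine supportedOnLE_piKronecker fun d' => ?_
  obtain rfl | hd := eq_or_ne d' d
  · rwa [MonoidHom.mulSingle_apply, Pi.mulSingle_eq_same]
  · rw [MonoidHom.mulSingle_apply, Pi.mulSingle_eq_of_ne hd]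
    exact supportedOnLE_one

end CommSemiring

variable [CommRing R]

theorem isUnit_piKronecker {A : ∀ d, Matrix (κ d) (κ d) R} (hA : ∀ d, IsUnit (A d)) :
    IsUnit (piKronecker A) :=
  (Pi.isUnit_iff.2 hA).map piKronecker

theorem inv_modeBracket {d : ι} {A : Matrix (κ d) (κ d) R} (hA : IsUnit A) :
    (modeBracket d A)⁻¹ = modeBracket d A⁻¹ := by
  refine inv_eq_left_inv ?_
  rw [← map_mul, nonsing_inv_mul _ ((isUnit_iff_isUnit_det A).1 hA), map_one]

section LE

variable [∀ d, LE (κ d)] {S : Finset (∀ d, κ d)} {A : ∀ d, Matrix (κ d) (κ d) R}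

theorem isUnit_chop_piKronecker_of_upper (hS : IsLowerSet (S : Set (∀ d, κ d)))
    (hA : ∀ d, SupportedOnLE (A d)) (hu : ∀ d, IsUnit (A d)) :
    IsUnit (chop S (piKronecker A)) :=
  isUnit_chop hS (supportedOnLE_piKronecker hA) (isUnit_piKronecker hu)

theorem isUnit_chop_piKronecker_of_lower (hS : IsLowerSet (S : Set (∀ d, κ d)))
    (hA : ∀ d, SupportedOnLE (A d)ᵀ) (hu : ∀ d, IsUnit (A d)) :
    IsUnit (chop S (piKronecker A)) := by
  rw [← isUnit_transpose, transpose_chop, transpose_piKronecker]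
  exact isUnit_chop_piKronecker_of_upper hS hA fun d => (isUnit_transpose _).2 (hu d)

end LE

variable [∀ d, Preorder (κ d)] {S : Finset (∀ d, κ d)} {A : ∀ d, Matrix (κ d) (κ d) R}
  {modes : List ι}

theorem inv_chop_piKronecker_of_upper (hS : IsLowerSet (S : Set (∀ d, κ d)))
    (hA : ∀ d, SupportedOnLE (A d)) (hu : ∀ d, IsUnit (A d)) (hnodup : modes.Nodup)
    (hmem : ∀ d, d ∈ modes) :
    (chop S (piKronecker A))⁻¹ = (modes.map fun d => chop S (modeBracket d (A d)⁻¹)).prod := by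
  have chop_factorization : chop S (piKronecker A) =
      (modes.reverse.map fun d => chop S (modeBracket d (A d))).prod := by
    rw [← list_prod_map_modeBracket (List.nodup_reverse.2 hnodup)
        (fun d => List.mem_reverse.2 (hmem d)) A,
      chop_list_prod_of_supportedOnLE hS, List.map_map, Function.comp_def]
    exact List.forall_mem_map.2 fun d _ => supportedOnLE_modeBracket (hA d)
  have inv_factor : ∀ d, (chop S (modeBracket d (A d)))⁻¹ = chop S (modeBracket d (A d)⁻¹) :=
    fun d => by
      rw [inv_chop hS (supportedOnLE_modeBracket (hA d)) ((hu d).map (modeBracket d)),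
        inv_modeBracket (hu d)]
  rw [chop_factorization, list_prod_inv_reverse]
  simp only [List.map_reverse, List.reverse_reverse, List.map_map, Function.comp_def, inv_factor]

theorem inv_chop_piKronecker_of_lower (hS : IsLowerSet (S : Set (∀ d, κ d)))
    (hA : ∀ d, SupportedOnLE (A d)ᵀ) (hu : ∀ d, IsUnit (A d)) (hnodup : modes.Nodup)
    (hmem : ∀ d, d ∈ modes) :
    (chop S (piKronecker A))⁻¹ = (modes.map fun d => chop S (modeBracket d (A d)⁻¹)).prod := by
  have inv_transpose := inv_chop_piKronecker_of_upper hS hA (fun d => (isUnit_transpose _).2 (hu d))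
    (List.nodup_reverse.2 hnodup) (fun d => List.mem_reverse.2 (hmem d))
  apply transpose_injective
  rw [transpose_nonsing_inv, transpose_chop, transpose_piKronecker, inv_transpose,
    transpose_list_prod, List.map_map, List.map_reverse]
  simp only [Function.comp_def, transpose_chop, transpose_modeBracket, transpose_nonsing_inv]

end Kronecker

end ChoppedKernel

open ChoppedKernel
open scoped Matrix

theorem chopped_kernel_inverse_general {ι R : Type*} [Fintype ι] [DecidableEq ι] [CommRing R]
    {κ : ι → Type*} [∀ d, Fintype (κ d)] [∀ d, DecidableEq (κ d)] [∀ d, Preorder (κ d)]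
    {L U : ∀ d, Matrix (κ d) (κ d) R} (hLunit : ∀ d, IsUnit (L d)) (hUunit : ∀ d, IsUnit (U d))
    (hL : ∀ d, SupportedOnLE (L d)ᵀ) (hU : ∀ d, SupportedOnLE (U d))
    {S : Finset (∀ d, κ d)} (hS : IsLowerSet (S : Set (∀ d, κ d)))
    {modes : List ι} (hnodup : modes.Nodup) (hmem : ∀ d, d ∈ modes) :
    IsUnit (chop S (piKronecker fun d => L d * U d)) ∧
      (chop S (piKronecker fun d => L d * U d))⁻¹ =
        (modes.map fun d => chop S (modeBracket d (U d)⁻¹)).prod *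
          (modes.map fun d => chop S (modeBracket d (L d)⁻¹)).prod := by
  have chop_factorization : chop S (piKronecker fun d => L d * U d) =
      chop S (piKronecker L) * chop S (piKronecker U) :=
    (congrArg (chop S) (map_mul piKronecker L U)).trans
      (chop_mul_of_supportedOnLE hS _ (supportedOnLE_piKronecker hU))
  rw [chop_factorization, Matrix.mul_inv_rev,
    inv_chop_piKronecker_of_upper hS hU hUunit hnodup hmem,
    inv_chop_piKronecker_of_lower hS hL hLunit hnodup hmem]
  exact ⟨(isUnit_chop_piKronecker_of_lower hS hL hLunit).mul
    (isUnit_chop_piKronecker_of_upper hS hU hUunit), rfl⟩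

/-- Direct inversion of a separable kernel over an incomplete grid: for a
nonempty downward-closed (CUD) set `S` of multi-indices and invertible lower/upper
triangular factors `L⁽ᵈ⁾`, `U⁽ᵈ⁾`, the chop `K̂` of `𝐊 = ⊗_d (L⁽ᵈ⁾ U⁽ᵈ⁾)` to `S` is
invertible, and `K̂⁻¹` is the ordered product of the chops of the one-mode bracket
matrices built from `(U⁽ᵈ⁾)⁻¹` followed by those built from `(L⁽ᵈ⁾)⁻¹`. -/
theorem chopped_kernel_inverse (D : ℕ) (n : Fin D → ℕ)
    (L U : (d : Fin D) → Matrix (Fin (n d)) (Fin (n d)) ℝ)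
    (hLunit : ∀ d, IsUnit (L d)) (hUunit : ∀ d, IsUnit (U d))
    (hLt : ∀ d, ∀ a b : Fin (n d), L d a b ≠ 0 → b ≤ a)
    (hUt : ∀ d, ∀ a b : Fin (n d), U d a b ≠ 0 → a ≤ b)
    (S : Finset ((d : Fin D) → Fin (n d))) (hSne : S.Nonempty)
    (hS : ∀ ⦃i j : (d : Fin D) → Fin (n d)⦄, (∀ d, i d ≤ j d) → j ∈ S → i ∈ S)
    (bLinv bUinv : (d : Fin D) →
      Matrix ((d : Fin D) → Fin (n d)) ((d : Fin D) → Fin (n d)) ℝ)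
    (hbLinv : ∀ d i j, bLinv d i j =
      (L d)⁻¹ (i d) (j d) * ∏ d' ∈ Finset.univ.erase d, (if i d' = j d' then (1 : ℝ) else 0))
    (hbUinv : ∀ d i j, bUinv d i j =
      (U d)⁻¹ (i d) (j d) * ∏ d' ∈ Finset.univ.erase d, (if i d' = j d' then (1 : ℝ) else 0))
    (bigK : Matrix ((d : Fin D) → Fin (n d)) ((d : Fin D) → Fin (n d)) ℝ)
    (hbigK : ∀ i j, bigK i j = ∏ d, (L d * U d) (i d) (j d)) :
    IsUnit (bigK.submatrix (fun i : ↥S => (i : (d : Fin D) → Fin (n d)))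
        (fun j : ↥S => (j : (d : Fin D) → Fin (n d)))) ∧
      (bigK.submatrix (fun i : ↥S => (i : (d : Fin D) → Fin (n d)))
          (fun j : ↥S => (j : (d : Fin D) → Fin (n d))))⁻¹ =
        ((List.finRange D).map (fun d =>
            (bUinv d).submatrix (fun i : ↥S => (i : (d : Fin D) → Fin (n d)))
              (fun j : ↥S => (j : (d : Fin D) → Fin (n d))))).prod *
          ((List.finRange D).map (fun d =>
            (bLinv d).submatrix (fun i : ↥S => (i : (d : Fin D) → Fin (n d)))
              (fun j : ↥S => (j : (d : Fin D) → Fin (n d))))).prod := by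
  obtain rfl : bUinv = fun d => modeBracket d (U d)⁻¹ := by ext; rw [hbUinv, modeBracket_apply]
  obtain rfl : bLinv = fun d => modeBracket d (L d)⁻¹ := by ext; rw [hbLinv, modeBracket_apply]
  obtain rfl : bigK = piKronecker fun d => L d * U d := by ext; rw [hbigK, piKronecker_apply]
  exact chopped_kernel_inverse_general hLunit hUunit (fun d i j => hLt d j i) hUt
    (fun _ _ hle hi => hS hle hi) (List.nodup_finRange D) List.mem_finRange
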